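/- In the restricted game RL^1(X,Y;v), the best guaranteed payoff of player X is no worse than the equilibrium value of the classic General Lotto game: sup_{F_X ∈ 𝔽(X)} inf_{F_Y ∈ 𝔽^1(Y)} π_X(F_X,F_Y) ≥ π_GL(X,Y), where π_GL(X,Y) := X/(2Y) if X ≤ Y and π_GL(X,Y) := 1 − Y/(2X) if X > Y. -/

import Mathlib

open MeasureTheory Finset

noncomputable section

/-- Admissible strategies for a player with budget `B`: Borel probability measures on `ℝ^C`
supported (i.e. concentrated, with full measure) on the nonnegative orthant, whose expected
total allocation is at most `B`. -/
def Strat (C : ℕ) (B : ℝ) : Set (Measure (Fin C → ℝ)) :=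
  {μ | IsProbabilityMeasure μ ∧ μ {x | ∀ c, 0 ≤ x c} = 1 ∧
    ∫⁻ x, ENNReal.ofReal (∑ c, x c) ∂μ ≤ ENNReal.ofReal B}

/-- Expected payoff to player `X`: `E[Σ_c v_c · 1{x_c ≥ y_c}]`. -/
def payoff (C : ℕ) (v : Fin C → ℝ) (F G : Measure (Fin C → ℝ)) : ℝ :=
  ∫ x, (∫ y, (∑ c, if y c ≤ x c then v c else 0) ∂G) ∂F

/-- Allocations `t·e_c` with at most one positive coordinate. -/
def R1 (C : ℕ) : Set (Fin C → ℝ) :=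
  {y | ∃ c : Fin C, ∃ t : ℝ, 0 ≤ t ∧ y = fun c' => if c' = c then t else 0}

/-- Restricted strategies: admissible strategies concentrated on `R1`. -/
def Strat1 (C : ℕ) (B : ℝ) : Set (Measure (Fin C → ℝ)) :=
  {μ | μ ∈ Strat C B ∧ μ (R1 C) = 1}

/-!
Player X spends along the value vector: she allocates `t • v`, where with probability
`p = X / max X Y` the scale `t` is uniform on `[0, m]`, `m = 2 * max X Y`, and otherwise `t = 0`.
This costs `p * m / 2 = X` on average. A bid `y` on contest `c` is matched with probability at least
`p * (1 - y / (m * v c))`, so her expected winnings from contest `c` are at least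
`p * v c - (p / m) * y`: every unit spent by player Y, wherever it goes, lowers the payoff by at
most `p / m`. Hence she secures `p * (1 - Y / m)`, which is the General Lotto value, against every
strategy of budget `Y`.
-/

open ProbabilityTheory unitInterval

lemma integral_le_of_nonneg_of_le {α : Type*} [MeasurableSpace α] {μ : Measure α}
    [IsProbabilityMeasure μ] {f : α → ℝ} {r : ℝ} (hf : ∀ x, 0 ≤ f x) (hr : ∀ x, f x ≤ r) :
    ∫ x, f x ∂μ ≤ r := by
  simpa using integral_mono_of_nonneg (μ := μ) (.of_forall hf) (integrable_const r) (.of_forall hr)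

section Winnings

variable {C : ℕ} {v : Fin C → ℝ} {F G : Measure (Fin C → ℝ)}

/-- The value of the contests won by player X when the players allocate `x` and `y`; it is the
integrand of `payoff`. -/
def winnings (v x y : Fin C → ℝ) : ℝ :=
  ∑ c, if y c ≤ x c then v c else 0

lemma winnings_nonneg (hv : ∀ c, 0 ≤ v c) (x y : Fin C → ℝ) : 0 ≤ winnings v x y :=
  sum_nonneg fun c _ => by split_ifs; exacts [hv c, le_rfl]

lemma winnings_le_sum (hv : ∀ c, 0 ≤ v c) (x y : Fin C → ℝ) : winnings v x y ≤ ∑ c, v c :=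
  sum_le_sum fun c _ => by split_ifs; exacts [le_rfl, hv c]

lemma integrable_winnings (v : Fin C → ℝ) (F G : Measure (Fin C → ℝ)) [IsFiniteMeasure F]
    [IsFiniteMeasure G] :
    Integrable (fun z : (Fin C → ℝ) × (Fin C → ℝ) => winnings v z.1 z.2) (F.prod G) := by
  refine integrable_finsetSum _ fun c _ => ?_
  have hwin : MeasurableSet {z : (Fin C → ℝ) × (Fin C → ℝ) | z.2 c ≤ z.1 c} :=
    measurableSet_le (by fun_prop) (by fun_prop)
  exact (integrable_const (v c)).indicator hwin

lemma integral_winnings (v : Fin C → ℝ) (F : Measure (Fin C → ℝ)) [IsFiniteMeasure F]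
    (y : Fin C → ℝ) :
    ∫ x, winnings v x y ∂F = ∑ c, v c * F.real {x | y c ≤ x c} := by
  have hwin (c : Fin C) : MeasurableSet {x : Fin C → ℝ | y c ≤ x c} :=
    measurableSet_le measurable_const (measurable_pi_apply c)
  calc ∫ x, winnings v x y ∂F
      = ∫ x, ∑ c, {x : Fin C → ℝ | y c ≤ x c}.indicator (fun _ => v c) x ∂F := rfl
    _ = ∑ c, ∫ x, {x : Fin C → ℝ | y c ≤ x c}.indicator (fun _ => v c) x ∂F :=
        integral_finsetSum _ fun c _ => (integrable_const (v c)).indicator (hwin c)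
    _ = ∑ c, v c * F.real {x | y c ≤ x c} := by
        simp only [integral_indicator_const _ (hwin _), smul_eq_mul, mul_comm]

lemma payoff_nonneg (hv : ∀ c, 0 ≤ v c) : 0 ≤ payoff C v F G :=
  integral_nonneg fun x => integral_nonneg (winnings_nonneg hv x)

lemma payoff_le_sum (hv : ∀ c, 0 ≤ v c) [IsProbabilityMeasure F] [IsProbabilityMeasure G] :
    payoff C v F G ≤ ∑ c, v c := by
  refine integral_le_of_nonneg_of_le (fun x => integral_nonneg (winnings_nonneg hv x)) fun x => ?_
  exact integral_le_of_nonneg_of_le (winnings_nonneg hv x) (winnings_le_sum hv x)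

lemma le_iSup_iInf_payoff {S T : Set (Measure (Fin C → ℝ))} {r : ℝ} (hv : ∀ c, 0 ≤ v c)
    (hS : ∀ F ∈ S, IsProbabilityMeasure F) (hT : ∀ G ∈ T, IsProbabilityMeasure G)
    (hTne : T.Nonempty) (hF : F ∈ S) (hr : ∀ G ∈ T, r ≤ payoff C v F G) :
    r ≤ ⨆ F : S, ⨅ G : T, payoff C v F.1 G.1 := by
  obtain ⟨G₀, hG₀⟩ := hTne
  have : Nonempty T := ⟨⟨G₀, hG₀⟩⟩
  have hbelow (F : S) : BddBelow (Set.range fun G : T => payoff C v F.1 G.1) :=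
    ⟨0, Set.forall_mem_range.2 fun _ => payoff_nonneg hv⟩
  have habove : BddAbove (Set.range fun F : S => ⨅ G : T, payoff C v F.1 G.1) := by
    refine ⟨∑ c, v c, Set.forall_mem_range.2 fun F => ?_⟩
    have := hS F F.2
    have := hT G₀ hG₀
    exact (ciInf_le (hbelow F) ⟨G₀, hG₀⟩).trans (payoff_le_sum hv)
  exact le_ciSup_of_le habove ⟨F, hF⟩ (le_ciInf fun G => hr G G.2)

end Winnings

section Budget

variable {C : ℕ} {B : ℝ} {G : Measure (Fin C → ℝ)}

lemma ae_nonneg_of_mem_strat (hG : G ∈ Strat C B) : ∀ᵐ y ∂G, ∀ c, 0 ≤ y c := by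
  obtain ⟨_, hnonneg, -⟩ := hG
  exact (mem_ae_iff_prob_eq_one (measurableSet_Ici (a := (0 : Fin C → ℝ)))).2 hnonneg

lemma ae_sum_nonneg_of_mem_strat (hG : G ∈ Strat C B) : ∀ᵐ y ∂G, 0 ≤ ∑ c, y c :=
  (ae_nonneg_of_mem_strat hG).mono fun _ hy => sum_nonneg fun c _ => hy c

lemma integrable_sum_of_mem_strat (hG : G ∈ Strat C B) : Integrable (fun y => ∑ c, y c) G :=
  ⟨by fun_prop, (hasFiniteIntegral_iff_ofReal (ae_sum_nonneg_of_mem_strat hG)).2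
    (hG.2.2.trans_lt ENNReal.ofReal_lt_top)⟩

lemma integral_sum_le_of_mem_strat (hB : 0 ≤ B) (hG : G ∈ Strat C B) :
    ∫ y, ∑ c, y c ∂G ≤ B := by
  rw [integral_eq_lintegral_of_nonneg_ae (ae_sum_nonneg_of_mem_strat hG) (by fun_prop)]
  exact ENNReal.toReal_le_of_le_ofReal hB hG.2.2

lemma dirac_zero_mem_strat1 (hC : 0 < C) (B : ℝ) :
    Measure.dirac (0 : Fin C → ℝ) ∈ Strat1 C B := by
  refine ⟨⟨inferInstance, Measure.dirac_apply_of_mem (by simp), by simp⟩, ?_⟩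
  exact Measure.dirac_apply_of_mem ⟨⟨0, hC⟩, 0, le_rfl, by ext; simp⟩

lemma sum_sub_mul_le_payoff {v a : Fin C → ℝ} {b : ℝ} {F : Measure (Fin C → ℝ)}
    [IsFiniteMeasure F] (hb : 0 ≤ b) (hB : 0 ≤ B) (hG : G ∈ Strat C B)
    (htail : ∀ c t, 0 ≤ t → a c - b * t ≤ v c * F.real {x | t ≤ x c}) :
    ∑ c, a c - b * B ≤ payoff C v F G := by
  have : IsProbabilityMeasure G := hG.1
  have htotal : Integrable (fun y => b * ∑ c, y c) G :=
    (integrable_sum_of_mem_strat hG).const_mul b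
  have hwin := integrable_winnings v F G
  have hpointwise : ∀ᵐ y ∂G, ∑ c, a c - b * ∑ c, y c ≤ ∫ x, winnings v x y ∂F := by
    filter_upwards [ae_nonneg_of_mem_strat hG] with y hy
    rw [integral_winnings, mul_sum, ← sum_sub_distrib]
    exact sum_le_sum fun c _ => htail c (y c) (hy c)
  calc ∑ c, a c - b * B
      ≤ ∑ c, a c - b * ∫ y, ∑ c, y c ∂G := by
        gcongr
        exact integral_sum_le_of_mem_strat hB hG
    _ = ∫ y, (∑ c, a c - b * ∑ c, y c) ∂G := by
        rw [integral_sub (integrable_const _) htotal, integral_const_mul]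
        simp
    _ ≤ ∫ y, ∫ x, winnings v x y ∂F ∂G :=
        integral_mono_ae ((integrable_const _).sub htotal) hwin.integral_prod_right hpointwise
    _ = payoff C v F G := (integral_integral_swap hwin).symm

end Budget

section ProportionalStrategy

variable {C : ℕ} {v : Fin C → ℝ} {ν : Measure ℝ}

/-- The strategy that draws a scale `t` from `ν` and allocates `t • v`, that is, in proportion to
the values of the contests. -/
def proportionalStrategy (v : Fin C → ℝ) (ν : Measure ℝ) : Measure (Fin C → ℝ) :=
  ν.map (· • v)

instance [IsProbabilityMeasure ν] : IsProbabilityMeasure (proportionalStrategy v ν) :=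
  Measure.isProbabilityMeasure_map (by fun_prop)

lemma proportionalStrategy_mem_strat {B : ℝ} [IsProbabilityMeasure ν] (hv : ∀ c, 0 ≤ v c)
    (hsum : ∑ c, v c = 1) (hν : ∀ᵐ t ∂ν, 0 ≤ t)
    (hmean : ∫⁻ t, ENNReal.ofReal t ∂ν ≤ ENNReal.ofReal B) :
    proportionalStrategy v ν ∈ Strat C B := by
  have horthant : MeasurableSet {x : Fin C → ℝ | ∀ c, 0 ≤ x c} :=
    measurableSet_Ici (a := (0 : Fin C → ℝ))
  refine ⟨inferInstance, ?_, ?_⟩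
  · refine (mem_ae_iff_prob_eq_one horthant).1 ?_
    refine (ae_map_iff (by fun_prop) horthant).2 ?_
    exact hν.mono fun t ht c => mul_nonneg ht (hv c)
  · have htotal (t : ℝ) : ∑ c, (t • v) c = t := by
      simp only [Pi.smul_apply, smul_eq_mul, ← mul_sum, hsum, mul_one]
    rw [proportionalStrategy, lintegral_map (by fun_prop) (by fun_prop)]
    simpa only [htotal] using hmean

lemma sub_mul_le_mul_proportionalStrategy_real {a b y : ℝ} {c : Fin C} (hvc : 0 ≤ v c)
    (hb : 0 ≤ b) (hy : 0 ≤ y) (htail : ∀ t, 0 ≤ t → a - b * t ≤ ν.real (Set.Ici t)) :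
    v c * a - b * y ≤ v c * (proportionalStrategy v ν).real {x | y ≤ x c} := by
  obtain hvc | hvc := hvc.eq_or_lt
  · simpa [← hvc] using mul_nonneg hb hy
  have hpreimage : (· • v) ⁻¹' {x : Fin C → ℝ | y ≤ x c} = Set.Ici (y / v c) := by
    ext t
    simp [div_le_iff₀ hvc]
  rw [proportionalStrategy, map_measureReal_apply (by fun_prop)
    (measurableSet_le measurable_const (measurable_pi_apply c)), hpreimage]
  calc v c * a - b * y = v c * (a - b * (y / v c)) := by field_simp
    _ ≤ v c * ν.real (Set.Ici (y / v c)) := by gcongr; exact htail _ (by positivity)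

lemma sub_mul_le_payoff_proportionalStrategy {a b B : ℝ} {G : Measure (Fin C → ℝ)}
    [IsProbabilityMeasure ν] (hv : ∀ c, 0 ≤ v c) (hsum : ∑ c, v c = 1) (hb : 0 ≤ b) (hB : 0 ≤ B)
    (hG : G ∈ Strat C B) (htail : ∀ t, 0 ≤ t → a - b * t ≤ ν.real (Set.Ici t)) :
    a - b * B ≤ payoff C v (proportionalStrategy v ν) G := by
  have hpayoff := sum_sub_mul_le_payoff hb hB hG fun c _ ht =>
    sub_mul_le_mul_proportionalStrategy_real (hv c) hb ht htail
  rwa [← sum_mul, hsum, one_mul] at hpayoff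

end ProportionalStrategy

section UniformScale

variable {m : ℝ}

lemma isProbabilityMeasure_cond_Icc (hm : 0 < m) :
    IsProbabilityMeasure (volume[|Set.Icc 0 m] : Measure ℝ) :=
  cond_isProbabilityMeasure_of_finite (by simpa using hm) (by simp)

lemma one_sub_div_le_cond_Icc_real_Ici (hm : 0 < m) {t : ℝ} (ht : 0 ≤ t) :
    1 - t / m ≤ (volume[|Set.Icc 0 m] : Measure ℝ).real (Set.Ici t) := by
  have hinter : Set.Icc 0 m ∩ Set.Ici t = Set.Icc t m := by
    ext u
    simp only [Set.mem_inter_iff, Set.mem_Icc, Set.mem_Ici]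
    grind
  have hreal : (volume[|Set.Icc 0 m] : Measure ℝ).real (Set.Ici t) = m⁻¹ * max (m - t) 0 := by
    rw [measureReal_def, cond_apply measurableSet_Icc, hinter]
    simp [hm.le, ENNReal.toReal_ofReal']
  calc 1 - t / m = m⁻¹ * (m - t) := by field_simp
    _ ≤ m⁻¹ * max (m - t) 0 := by gcongr; exact le_max_left _ _
    _ = _ := hreal.symm

lemma lintegral_ofReal_cond_Icc (hm : 0 < m) :
    ∫⁻ t, ENNReal.ofReal t ∂(volume[|Set.Icc 0 m] : Measure ℝ) = ENNReal.ofReal (m / 2) := by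
  have hid : IntegrableOn (fun t : ℝ => t) (Set.Icc 0 m) := continuous_id.integrableOn_Icc
  have hnonneg : ∀ᵐ t ∂(volume.restrict (Set.Icc 0 m)), 0 ≤ t :=
    (ae_restrict_mem measurableSet_Icc).mono fun _ ht => ht.1
  have hintegral : ∫ t in Set.Icc 0 m, t = m ^ 2 / 2 := by
    rw [integral_Icc_eq_integral_Ioc, ← intervalIntegral.integral_of_le hm.le, integral_id]
    ring
  rw [ProbabilityTheory.cond, lintegral_smul_measure,
    ← ofReal_integral_eq_lintegral_ofReal hid hnonneg, hintegral, Real.volume_Icc, sub_zero,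
    smul_eq_mul, ← ENNReal.ofReal_inv_of_pos hm, ← ENNReal.ofReal_mul (by positivity)]
  congr 1
  field_simp

end UniformScale

section LottoLaw

variable {m : ℝ}

/-- The law of the total allocation of player X in the General Lotto game: uniform on `[0, m]`
with probability `p`, and `0` otherwise. -/
def lottoLaw (p : I) (m : ℝ) : Measure ℝ :=
  toNNReal p • (volume[|Set.Icc 0 m] : Measure ℝ) + toNNReal (σ p) • Measure.dirac 0

lemma isProbabilityMeasure_lottoLaw (p : I) (hm : 0 < m) :
    IsProbabilityMeasure (lottoLaw p m) := by
  have := isProbabilityMeasure_cond_Icc hm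
  unfold lottoLaw
  infer_instance

lemma ae_nonneg_lottoLaw (p : I) (m : ℝ) : ∀ᵐ t ∂(lottoLaw p m), 0 ≤ t := by
  have huniform : ∀ᵐ t ∂(volume[|Set.Icc 0 m] : Measure ℝ), 0 ≤ t :=
    (ae_cond_mem measurableSet_Icc).mono fun _ ht => ht.1
  have hzero : ∀ᵐ t ∂(Measure.dirac (0 : ℝ)), 0 ≤ t := by simp
  exact ae_add_measure_iff.2 ⟨Measure.ae_smul_measure huniform _, Measure.ae_smul_measure hzero _⟩

lemma lintegral_ofReal_lottoLaw (p : I) (hm : 0 < m) :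
    ∫⁻ t, ENNReal.ofReal t ∂(lottoLaw p m) = ENNReal.ofReal (p * (m / 2)) := by
  rw [lottoLaw, lintegral_add_measure, lintegral_smul_measure, lintegral_smul_measure,
    lintegral_ofReal_cond_Icc hm, lintegral_dirac, ENNReal.ofReal_zero, smul_zero, add_zero,
    ENNReal.ofReal_mul p.2.1, ENNReal.smul_def, smul_eq_mul, ← ENNReal.ofReal_coe_nnreal,
    coe_toNNReal]

lemma sub_mul_le_lottoLaw_real_Ici (p : I) (hm : 0 < m) {t : ℝ} (ht : 0 ≤ t) :
    p - p / m * t ≤ (lottoLaw p m).real (Set.Ici t) := by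
  have := isProbabilityMeasure_cond_Icc hm
  calc (p : ℝ) - p / m * t = p * (1 - t / m) := by ring
    _ ≤ p * (volume[|Set.Icc 0 m] : Measure ℝ).real (Set.Ici t) := by
        gcongr
        exacts [p.2.1, one_sub_div_le_cond_Icc_real_Ici hm ht]
    _ = (toNNReal p • (volume[|Set.Icc 0 m] : Measure ℝ)).real (Set.Ici t) := by
        simp [measureReal_nnreal_smul_apply]
    _ ≤ (lottoLaw p m).real (Set.Ici t) := by
        rw [lottoLaw, measureReal_add_apply]
        exact le_add_of_nonneg_right measureReal_nonneg

end LottoLaw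

section Value

variable {X Y : ℝ}

/-- The equilibrium payoff `π_GL(X, Y)` of player X in the General Lotto game. -/
def generalLottoValue (X Y : ℝ) : ℝ :=
  if X ≤ Y then X / (2 * Y) else 1 - Y / (2 * X)

lemma generalLottoValue_eq (hX : 0 < X) :
    generalLottoValue X Y = X / max X Y - X / max X Y / (2 * max X Y) * Y := by
  unfold generalLottoValue
  split_ifs with h
  · have hY : 0 < Y := hX.trans_le h
    rw [max_eq_right h]
    field_simp
    ring
  · rw [max_eq_left (le_of_not_ge h)]
    field_simp

lemma exists_strat_generalLottoValue_le_payoff {C : ℕ} {v : Fin C → ℝ} (hv : ∀ c, 0 ≤ v c)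
    (hsum : ∑ c, v c = 1) (hX : 0 < X) (hY : 0 ≤ Y) :
    ∃ F ∈ Strat C X, ∀ G ∈ Strat C Y, generalLottoValue X Y ≤ payoff C v F G := by
  have hmax : 0 < max X Y := lt_max_of_lt_left hX
  have hm : 0 < 2 * max X Y := by positivity
  let p : I := ⟨X / max X Y, by positivity, (div_le_one hmax).2 (le_max_left X Y)⟩
  have hmean : (p : ℝ) * (2 * max X Y / 2) = X := by
    simp only [p]
    field_simp
  have := isProbabilityMeasure_lottoLaw p hm
  refine ⟨proportionalStrategy v (lottoLaw p (2 * max X Y)), ?_, fun G hG => ?_⟩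
  · refine proportionalStrategy_mem_strat hv hsum (ae_nonneg_lottoLaw p _) ?_
    rw [lintegral_ofReal_lottoLaw p hm, hmean]
  · rw [generalLottoValue_eq hX]
    exact sub_mul_le_payoff_proportionalStrategy hv hsum (by positivity) hY hG
      fun t ht => sub_mul_le_lottoLaw_real_Ici p hm ht

end Value

theorem RL1_maxmin_ge_GL_general {C : ℕ} {v : Fin C → ℝ} (hv : ∀ c, 0 ≤ v c)
    (hsum : ∑ c, v c = 1) {X Y : ℝ} (hX : 0 < X) (hY : 0 ≤ Y)
    {T : Set (Measure (Fin C → ℝ))} (hT : T ⊆ Strat C Y) (hTne : T.Nonempty) :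
    generalLottoValue X Y ≤ ⨆ F : Strat C X, ⨅ G : T, payoff C v F.1 G.1 := by
  obtain ⟨F, hF, hpayoff⟩ := exists_strat_generalLottoValue_le_payoff hv hsum hX hY
  exact le_iSup_iInf_payoff hv (fun _ hF => hF.1) (fun _ hG => (hT hG).1) hTne hF
    fun G hG => hpayoff G (hT hG)

/-- in the restricted game `RL^1(X,Y;v)`, the best guaranteed payoff of
player X is at least the classic General Lotto equilibrium value `π_GL(X,Y)`. -/
theorem RL1_maxmin_ge_GL (C : ℕ) (hC : 0 < C) (v : Fin C → ℝ)
    (hpos : ∀ c, 0 < v c) (hsum : ∑ c, v c = 1)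
    (X Y : ℝ) (hX : 0 < X) (hY : 0 < Y) :
    (if X ≤ Y then X / (2 * Y) else 1 - Y / (2 * X)) ≤
      ⨆ F : Strat C X, ⨅ G : Strat1 C Y, payoff C v F.1 G.1 :=
  RL1_maxmin_ge_GL_general (fun c => (hpos c).le) hsum hX hY.le (fun _ hG => hG.1)
    ⟨_, dirac_zero_mem_strat1 hC Y⟩
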